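/- arXiv:1801.06148 — 2 statements merged into one kernel-verified Lean document; each statement's English description precedes it below -/
import Mathlib

section
/- (À la Paul Lévy characterization in Hilbert space.) Let H be a separable Hilbert space, let (μ_n)_{n≥1} be Borel probability measures on H with finite second moments, and let f : H² → ℝ₊ be such that e_{2,2}(μ_n, ·) → f pointwise on H². Then there exists a Borel probability measure μ_∞ on H with finite second moment such that μ_n converges to μ_∞ in distribution with respect to the weak topology of H, the limit L := lim_n ∫_H ‖ξ‖² dμ_n(ξ) exists and is finite, and f(x)² = e_{2,2}(μ_∞, x)² + L − ∫_H ‖ξ‖² dμ_∞(ξ) for every x ∈ H². -/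
open MeasureTheory Filter Topology
open scoped ENNReal NNReal

/-- The `L^p`-quantization error function at level `N`. -/
noncomputable def quantErr {E : Type*} [NormedAddCommGroup E] [MeasurableSpace E]
    (p : ℝ) (N : ℕ) (μ : Measure E) (x : Fin N → E) : ℝ :=
  (∫⁻ ξ, ⨅ i, (‖ξ - x i‖₊ : ℝ≥0∞) ^ p ∂μ).toReal ^ (1 / p)

/-- `μ` has a finite `p`-th moment. -/
def HasFiniteMoment {E : Type*} [NormedAddCommGroup E] [MeasurableSpace E]
    (p : ℝ) (μ : Measure E) : Prop :=
  ∫⁻ ξ, (‖ξ‖₊ : ℝ≥0∞) ^ p ∂μ ≠ ∞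


/-- Convergence of integrals of bounded weakly continuous functions along a filter. -/
def WConv {H : Type*} [NormedAddCommGroup H] [InnerProductSpace ℝ H] [MeasurableSpace H]
    (l : Filter ℕ) (μ : ℕ → Measure H) (ν : Measure H) : Prop :=
  ∀ g : H → ℝ, (∃ Cg : ℝ, ∀ ξ, |g ξ| ≤ Cg) →
        Continuous (fun ξ : WeakSpace ℝ H => g ξ) →
        Tendsto (fun n => ∫ ξ, g ξ ∂(μ n)) l (𝓝 (∫ ξ, g ξ ∂ν))

section aux
variable {H : Type*} [NormedAddCommGroup H] [InnerProductSpace ℝ H]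

lemma weak_inner_cont (u : H) :
    Continuous (fun ξ : WeakSpace ℝ H => inner ℝ ((toWeakSpace ℝ H).symm ξ) u) := by
  have := WeakBilin.eval_continuous (topDualPairing ℝ H).flip (innerSL ℝ u)
  refine Continuous.congr this fun ξ => ?_
  rw [real_inner_comm]
  rfl

lemma strong_of_weak {g : H → ℝ} (hg : Continuous (fun ξ : WeakSpace ℝ H => g ξ)) :
    Continuous g :=
  hg.comp (toWeakSpaceCLM ℝ H).continuous

instance weakT2 : T2Space (WeakSpace ℝ H) :=
  (NormedSpace.isEmbedding_inclusionInDoubleDualWeak ℝ H).t2Space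

variable [CompleteSpace H]

lemma weak_ball_compact (R : ℝ) :
    IsCompact ((toWeakSpace ℝ H).symm ⁻¹' Metric.closedBall (0 : H) R) := by
  have h1 := WeakDual.isCompact_closedBall (𝕜 := ℝ) (E := H) 0 R
  let F : WeakDual ℝ H → WeakSpace ℝ H := fun x =>
    toWeakSpace ℝ H ((InnerProductSpace.toDual ℝ H).symm (WeakDual.toStrongDual x))
  have hF : Continuous F := by
    refine WeakBilin.continuous_of_continuous_eval (topDualPairing ℝ H).flip fun φ => ?_
    obtain ⟨u, rfl⟩ := (InnerProductSpace.toDual ℝ H).surjective φ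
    refine Continuous.congr (WeakDual.eval_continuous u) fun x => ?_
    change x u = inner ℝ u ((InnerProductSpace.toDual ℝ H).symm (WeakDual.toStrongDual x))
    rw [real_inner_comm, InnerProductSpace.toDual_symm_apply]
    rfl
  convert h1.image hF using 1
  ext y
  constructor
  · intro hy
    refine ⟨StrongDual.toWeakDual (InnerProductSpace.toDual ℝ H ((toWeakSpace ℝ H).symm y)), ?_, ?_⟩
    · simpa using hy
    · simp [F]
  · rintro ⟨x, hx, rfl⟩
    simpa [F] using hx

lemma weak_borel [TopologicalSpace.SeparableSpace H] [MeasurableSpace H] [BorelSpace H] :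
    @Measurable _ _ (borel (WeakSpace ℝ H)) _ (toWeakSpace ℝ H).symm := by
  let _ : MeasurableSpace (WeakSpace ℝ H) := borel _
  have : BorelSpace (WeakSpace ℝ H) := ⟨rfl⟩
  have hn : Measurable (fun ξ : WeakSpace ℝ H => ‖(toWeakSpace ℝ H).symm ξ‖) := by
    refine measurable_of_Iic fun r => ?_
    have := (weak_ball_compact (H := H) r).isClosed.measurableSet
    convert this using 1
    ext; simp
  have hd : ∀ x : H, Measurable (fun ξ : WeakSpace ℝ H => ‖(toWeakSpace ℝ H).symm ξ - x‖) := by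
    intro x
    have : (fun ξ : WeakSpace ℝ H => ‖(toWeakSpace ℝ H).symm ξ - x‖) = fun ξ =>
        √(‖(toWeakSpace ℝ H).symm ξ‖ ^ 2 - 2 * inner ℝ ((toWeakSpace ℝ H).symm ξ) x + ‖x‖ ^ 2) := by
      ext ξ
      rw [← norm_sub_sq_real, Real.sqrt_sq (norm_nonneg _)]
    rw [this]
    have := (weak_inner_cont x).measurable
    fun_prop
  have := UniformSpace.secondCountable_of_separable H
  refine measurable_of_isOpen fun U hU => ?_
  choose! r hr hrU using Metric.isOpen_iff.1 hU
  obtain ⟨T, hT, hTU⟩ := TopologicalSpace.isOpen_iUnion_countable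
    (fun x : U => Metric.ball (x : H) (r x)) (fun _ => Metric.isOpen_ball)
  have : U = ⋃ x ∈ T, Metric.ball (x : H) (r x) := by
    rw [hTU]
    ext y
    simp only [Set.mem_iUnion]
    constructor
    · intro hy; exact ⟨⟨y, hy⟩, Metric.mem_ball_self (hr y hy)⟩
    · rintro ⟨x, hx⟩; exact hrU x x.2 hx
  rw [this]
  simp only [Set.preimage_iUnion]
  refine MeasurableSet.biUnion hT fun x _ => ?_
  have := measurableSet_lt (hd x) (measurable_const (a := r x))
  convert this using 1
  ext y
  simp [dist_eq_norm]

variable [TopologicalSpace.SeparableSpace H] [MeasurableSpace H] [BorelSpace H]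

/-- Existence of limits along ultrafilters. -/
lemma exists_limit (μ : ℕ → Measure H) [∀ n, IsProbabilityMeasure (μ n)] (M : ℝ≥0)
    (hM : ∀ n, ∫⁻ ξ, ENNReal.ofReal (‖ξ‖ ^ 2) ∂(μ n) ≤ M) (U : Ultrafilter ℕ) :
    ∃ ν : Measure H, IsProbabilityMeasure ν ∧ WConv U μ ν := by
  let _ : MeasurableSpace (WeakSpace ℝ H) := borel _
  have : BorelSpace (WeakSpace ℝ H) := ⟨rfl⟩
  have m1 : Measurable (toWeakSpace ℝ H).symm := weak_borel
  have m2 : Measurable (toWeakSpace ℝ H) := (toWeakSpaceCLM ℝ H).continuous.measurable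
  let K : ℕ → Set (WeakSpace ℝ H) := fun n =>
    (toWeakSpace ℝ H).symm ⁻¹' Metric.closedBall (0 : H) (n + 1)
  let u : ℕ → ℝ≥0 := fun n => M * (1 / ((n : ℝ≥0) + 1))
  have hu : Tendsto u atTop (𝓝 0) := by
    have := (tendsto_one_div_add_atTop_nhds_zero_nat (𝕜 := ℝ≥0)).const_mul M
    simpa [u] using this
  have hKm : Monotone K := by
    intro a b hab
    apply Set.preimage_mono
    apply Metric.closedBall_subset_closedBall
    gcongr
  have hc := isCompact_setOfPred_probabilityMeasure_mass_eq_compl_isCompact_le hu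
    (fun n => weak_ball_compact (H := H) (n + 1)) (Or.inr hKm)
  let P : ℕ → ProbabilityMeasure (WeakSpace ℝ H) := fun n =>
    ⟨(μ n).map (toWeakSpace ℝ H), Measure.isProbabilityMeasure_map m2.aemeasurable⟩
  have hP : ∀ n, P n ∈ {ν : ProbabilityMeasure (WeakSpace ℝ H) | ∀ k, ν (K k)ᶜ ≤ u k} := by
    intro n k
    rw [← ENNReal.coe_le_coe, ProbabilityMeasure.ennreal_coeFn_eq_coeFn_toMeasure]
    change (μ n).map (toWeakSpace ℝ H) (K k)ᶜ ≤ _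
    rw [Measure.map_apply m2 (weak_ball_compact _).isClosed.measurableSet.compl]
    have hk : (1 : ℝ) ≤ k + 1 := by simp
    calc (μ n) ((toWeakSpace ℝ H) ⁻¹' (K k)ᶜ)
        ≤ (μ n) {ξ | ENNReal.ofReal (k + 1) ≤ ENNReal.ofReal (‖ξ‖ ^ 2)} := by
          apply measure_mono
          intro ξ hξ
          have : (k + 1 : ℝ) < ‖ξ‖ := by simpa [K] using hξ
          apply ENNReal.ofReal_le_ofReal
          nlinarith
      _ ≤ (∫⁻ ξ, ENNReal.ofReal (‖ξ‖ ^ 2) ∂(μ n)) / ENNReal.ofReal (k + 1) :=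
          meas_ge_le_lintegral_div (by fun_prop) (by simp; positivity) (by simp)
      _ ≤ M / ENNReal.ofReal (k + 1) := by gcongr; exact hM n
      _ = _ := by
          have : ENNReal.ofReal (k + 1) = (((k : ℝ≥0) + 1 : ℝ≥0) : ℝ≥0∞) := by
            rw [ENNReal.ofReal, Real.toNNReal_add (by simp) (by simp)]; simp
          rw [this, ← ENNReal.coe_div (by positivity)]
          simp [u, div_eq_mul_inv]
  obtain ⟨Q, -, hQ⟩ := isCompact_iff_ultrafilter_le_nhds.1 hc (U.map P)
    (by rw [le_principal_iff]; exact Filter.univ_mem' (f := (U : Filter ℕ)) hP)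
  have hQ' : Tendsto P U (𝓝 Q) := hQ
  rw [ProbabilityMeasure.tendsto_iff_forall_integral_tendsto] at hQ'
  refine ⟨(Q : Measure (WeakSpace ℝ H)).map (toWeakSpace ℝ H).symm,
    Measure.isProbabilityMeasure_map m1.aemeasurable, ?_⟩
  rintro g ⟨C, hC⟩ hg
  have hgH := strong_of_weak hg
  have := hQ' (BoundedContinuousFunction.ofNormedAddCommGroup (fun ξ : WeakSpace ℝ H => g ξ) hg C
    (fun ξ => hC ξ))
  rw [integral_map m1.aemeasurable hgH.measurable.aestronglyMeasurable]
  refine this.congr fun n => ?_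
  change ∫ ξ, g ξ ∂((μ n).map (toWeakSpace ℝ H)) = _
  rw [integral_map m2.aemeasurable hg.measurable.aestronglyMeasurable]
  rfl
end aux

section aux2
variable {H : Type*} [NormedAddCommGroup H] [InnerProductSpace ℝ H]
  [MeasurableSpace H] [BorelSpace H]

lemma weak_second_moment [TopologicalSpace.SeparableSpace H]
    (μ : ℕ → Measure H) [∀ n, IsProbabilityMeasure (μ n)] (M : ℝ)
    (hi : ∀ n, Integrable (fun ξ => ‖ξ‖ ^ 2) (μ n))
    (hM : ∀ n, ∫ ξ, ‖ξ‖ ^ 2 ∂(μ n) ≤ M) (l : Filter ℕ) [l.NeBot]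
    (ν : Measure H) [IsProbabilityMeasure ν] (h : WConv l μ ν) :
    ∫⁻ ξ, ENNReal.ofReal (‖ξ‖ ^ 2) ∂ν ≤ ENNReal.ofReal M := by
  let d : ℕ → H := TopologicalSpace.denseSeq H
  let ψ : ℕ → H → ℝ := fun N ξ => (Finset.range (N + 1)).sup' Finset.nonempty_range_add_one
    (fun k => max 0 (2 * inner ℝ ξ (d k) - ‖d k‖ ^ 2))
  let φ : ℕ → H → ℝ := fun N ξ => min N (ψ N ξ)
  have hq : ∀ ξ k, 2 * inner ℝ ξ (d k) - ‖d k‖ ^ 2 = ‖ξ‖ ^ 2 - ‖ξ - d k‖ ^ 2 := by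
    intro ξ k; rw [norm_sub_sq_real]; ring
  have hψle : ∀ N ξ, ψ N ξ ≤ ‖ξ‖ ^ 2 := by
    intro N ξ
    refine Finset.sup'_le _ _ fun k _ => ?_
    rw [hq]
    exact max_le (by positivity) (by nlinarith [sq_nonneg ‖ξ - d k‖])
  have hψge : ∀ N k ξ, k ≤ N → ‖ξ‖ ^ 2 - ‖ξ - d k‖ ^ 2 ≤ ψ N ξ := by
    intro N k ξ hk
    rw [← hq]
    refine le_trans (le_max_right 0 _) ?_
    exact Finset.le_sup' (fun k => max 0 (2 * inner ℝ ξ (d k) - ‖d k‖ ^ 2))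
      (Finset.mem_range.2 (Nat.lt_succ_of_le hk))
  have hψ0 : ∀ N ξ, 0 ≤ ψ N ξ := by
    intro N ξ
    refine le_trans (le_max_left 0 (2 * inner ℝ ξ (d 0) - ‖d 0‖ ^ 2)) ?_
    exact Finset.le_sup' (fun k => max 0 (2 * inner ℝ ξ (d k) - ‖d k‖ ^ 2))
      (Finset.mem_range.2 (Nat.succ_pos N))
  have hφ0 : ∀ N ξ, 0 ≤ φ N ξ := fun N ξ => le_min (by positivity) (hψ0 N ξ)
  have hφb : ∀ N ξ, |φ N ξ| ≤ N := fun N ξ => by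
    rw [abs_of_nonneg (hφ0 N ξ)]; exact min_le_left _ _
  have hφw : ∀ N, Continuous (fun ξ : WeakSpace ℝ H => φ N ξ) := by
    intro N
    refine continuous_const.min ?_
    refine Continuous.finset_sup'_apply _ fun k _ => ?_
    exact continuous_const.max (((weak_inner_cont (d k)).const_mul 2).sub continuous_const)
  have hφc : ∀ N, Continuous (φ N) := fun N => strong_of_weak (hφw N)
  have hφi : ∀ N (P : Measure H) [IsProbabilityMeasure P], Integrable (φ N) P := by
    intro N P _
    exact Integrable.of_bound (hφc N).measurable.aestronglyMeasurable (N : ℝ)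
      (ae_of_all _ fun ξ => hφb N ξ)
  have hφint : ∀ N, ∫ ξ, φ N ξ ∂ν ≤ M := by
    intro N
    refine le_of_tendsto (h (φ N) ⟨N, hφb N⟩ (hφw N)) (Eventually.of_forall fun n => ?_)
    refine le_trans (integral_mono (hφi N _) (hi n) fun ξ => ?_) (hM n)
    exact (min_le_right _ _).trans (hψle N ξ)
  have hlim : ∀ ξ, Tendsto (fun N => φ N ξ) atTop (𝓝 (‖ξ‖ ^ 2)) := by
    intro ξ
    rw [Metric.tendsto_atTop]
    intro ε hε
    obtain ⟨k, hk⟩ := (TopologicalSpace.denseRange_denseSeq H).exists_dist_lt ξ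
      (Real.sqrt_pos.2 hε)
    have hk2 : ‖ξ - d k‖ ^ 2 < ε := by
      rw [dist_eq_norm] at hk
      exact (Real.lt_sqrt (norm_nonneg _)).1 hk
    obtain ⟨N0, hN0⟩ := exists_nat_ge (‖ξ‖ ^ 2)
    refine ⟨max k N0, fun N hN => ?_⟩
    have h1 := hψge N k ξ (le_trans (le_max_left _ _) hN)
    have h2 : (N0 : ℝ) ≤ N := by exact_mod_cast le_trans (le_max_right _ _) hN
    have h3 : φ N ξ = ψ N ξ := min_eq_right ((hψle N ξ).trans (hN0.trans h2))
    rw [Real.dist_eq, h3, abs_lt]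
    constructor <;> linarith [hψle N ξ]
  calc ∫⁻ ξ, ENNReal.ofReal (‖ξ‖ ^ 2) ∂ν
      = ∫⁻ ξ, liminf (fun N => ENNReal.ofReal (φ N ξ)) atTop ∂ν := by
        congr 1; ext ξ
        exact ((ENNReal.continuous_ofReal.tendsto _).comp (hlim ξ)).liminf_eq.symm
    _ ≤ liminf (fun N => ∫⁻ ξ, ENNReal.ofReal (φ N ξ) ∂ν) atTop :=
        lintegral_liminf_le fun N => (hφc N).measurable.ennreal_ofReal
    _ ≤ ENNReal.ofReal M := by
        refine liminf_le_of_frequently_le' (Frequently.of_forall fun N => ?_)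
        rw [← ofReal_integral_eq_lintegral_ofReal (hφi N ν) (ae_of_all _ (hφ0 N))]
        exact ENNReal.ofReal_le_ofReal (hφint N)

lemma integrable_lin (P : Measure H) [IsProbabilityMeasure P]
    (hP : Integrable (fun ξ => ‖ξ‖ ^ 2) P) (k : H → ℝ) (hk : Continuous k) (A B : ℝ)
    (hb : ∀ ξ, |k ξ| ≤ A + B * ‖ξ‖ ^ 2) : Integrable k P := by
  refine Integrable.mono' ((integrable_const A).add (hP.const_mul B))
    hk.measurable.aestronglyMeasurable (ae_of_all _ fun ξ => ?_)
  simpa using hb ξ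

lemma trunc_le (x R : ℝ) (hR : 0 < R) : |x - max (-R) (min x R)| ≤ x ^ 2 / R := by
  rw [le_div_iff₀ hR]
  rcases le_total x R with h | h
  · rw [min_eq_left h]
    rcases le_total (-R) x with h' | h'
    · rw [max_eq_right h']; simp; positivity
    · rw [max_eq_left h', abs_of_nonpos (by linarith)]; nlinarith
  · rw [min_eq_right h, max_eq_right (by linarith), abs_of_nonneg (by linarith)]; nlinarith

lemma wconv_ui
    (μ : ℕ → Measure H) [∀ n, IsProbabilityMeasure (μ n)] (M : ℝ)
    (hi : ∀ n, Integrable (fun ξ => ‖ξ‖ ^ 2) (μ n))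
    (hM : ∀ n, ∫ ξ, ‖ξ‖ ^ 2 ∂(μ n) ≤ M) (l : Filter ℕ)
    (ν : Measure H) [IsProbabilityMeasure ν] (h : WConv l μ ν)
    (hνi : Integrable (fun ξ => ‖ξ‖ ^ 2) ν) (hνM : ∫ ξ, ‖ξ‖ ^ 2 ∂ν ≤ M)
    (k : H → ℝ) (hk : Continuous (fun ξ : WeakSpace ℝ H => k ξ)) (A B : ℝ) (hA : 0 ≤ A)
    (hB : 0 ≤ B) (hb : ∀ ξ, k ξ ^ 2 ≤ A + B * ‖ξ‖ ^ 2) :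
    Tendsto (fun n => ∫ ξ, k ξ ∂(μ n)) l (𝓝 (∫ ξ, k ξ ∂ν)) := by
  have hkc := strong_of_weak hk
  have hM0 : 0 ≤ M := (integral_nonneg fun ξ => by positivity).trans hνM
  let D := A + B * M
  have hD : 0 ≤ D := by positivity
  have key : ∀ R : ℝ, 0 < R → ∀ (P : Measure H) [IsProbabilityMeasure P],
      Integrable (fun ξ => ‖ξ‖ ^ 2) P → ∫ ξ, ‖ξ‖ ^ 2 ∂P ≤ M →
      |∫ ξ, k ξ ∂P - ∫ ξ, max (-R) (min (k ξ) R) ∂P| ≤ D / R := by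
    intro R hR P _ hPi hPM
    have i1 : Integrable k P := by
      refine integrable_lin P hPi k hkc (A + 1) B fun ξ => ?_
      have := hb ξ
      rw [abs_le]; constructor <;> nlinarith [sq_nonneg (k ξ - 1), sq_nonneg (k ξ + 1)]
    have i2 : Integrable (fun ξ => max (-R) (min (k ξ) R)) P := by
      refine Integrable.of_bound (by fun_prop) R (ae_of_all _ fun ξ => ?_)
      rw [Real.norm_eq_abs, abs_le]
      exact ⟨le_max_left _ _, max_le (by linarith) (min_le_right _ _)⟩
    rw [← integral_sub i1 i2]
    have i3 : Integrable (fun ξ => (A + B * ‖ξ‖ ^ 2) / R) P :=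
      ((integrable_const A).add (hPi.const_mul B)).div_const R
    calc |∫ ξ, (k ξ - max (-R) (min (k ξ) R)) ∂P|
        ≤ ∫ ξ, |k ξ - max (-R) (min (k ξ) R)| ∂P := abs_integral_le_integral_abs
      _ ≤ ∫ ξ, (A + B * ‖ξ‖ ^ 2) / R ∂P := by
          refine integral_mono (i1.sub i2).abs i3 fun ξ => ?_
          refine (trunc_le (k ξ) R hR).trans ?_
          have := hb ξ
          gcongr
      _ = (A + B * ∫ ξ, ‖ξ‖ ^ 2 ∂P) / R := by
          rw [integral_div, integral_add (integrable_const A) (hPi.const_mul B),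
            integral_const_mul]
          simp
      _ ≤ D / R := by
          simp only [D]; gcongr
  rw [Metric.tendsto_nhds]
  intro ε hε
  obtain ⟨R, hR, hDR⟩ : ∃ R : ℝ, 0 < R ∧ D / R < ε / 3 := by
    refine ⟨3 * (D + 1) / ε, by positivity, ?_⟩
    rw [div_lt_iff₀ (by positivity)]
    field_simp
    linarith
  have hc := h (fun ξ => max (-R) (min (k ξ) R)) ⟨R, fun ξ => by
      rw [abs_le]
      exact ⟨le_max_left _ _, max_le (by linarith) (min_le_right _ _)⟩⟩
      (continuous_const.max (hk.min continuous_const))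
  rw [Metric.tendsto_nhds] at hc
  filter_upwards [hc (ε / 3) (by positivity)] with n hn
  rw [Real.dist_eq, abs_lt] at *
  have e1 := abs_le.1 (key R hR (μ n) (hi n) (hM n))
  have e2 := abs_le.1 (key R hR ν hνi hνM)
  constructor <;> linarith [e1.1, e1.2, e2.1, e2.2, hn.1, hn.2]

lemma real_unique (P Q : Measure ℝ) [IsProbabilityMeasure P] [IsProbabilityMeasure Q]
    (hP : Integrable id P) (hQ : Integrable id Q)
    (h : ∀ c : ℝ, ∫ x, max 0 (x - c) ∂P = ∫ x, max 0 (x - c) ∂Q) : P = Q := by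
  have hIntg : ∀ (S : Measure ℝ) [IsProbabilityMeasure S], Integrable id S → ∀ c : ℝ,
      Integrable (fun x => max 0 (x - c)) S := by
    intro S _ hS c
    have : Integrable (fun x : ℝ => x - c) S := hS.sub (integrable_const c)
    have := this.pos_part
    simpa [max_comm] using this
  have lim : ∀ (S : Measure ℝ) [IsProbabilityMeasure S], Integrable id S → ∀ c : ℝ,
      Tendsto (fun n : ℕ => ((n : ℝ) + 1) *
        (∫ x, max 0 (x - c) ∂S - ∫ x, max 0 (x - (c + 1 / ((n : ℝ) + 1))) ∂S)) atTop
        (𝓝 (S.real (Set.Ioi c))) := by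
    intro S _ hS c
    have e : S.real (Set.Ioi c) = ∫ x, (Set.Ioi c).indicator (fun _ => (1 : ℝ)) x ∂S := by
      rw [integral_indicator measurableSet_Ioi]; simp
    have e2 : ∀ n : ℕ, ((n : ℝ) + 1) *
        (∫ x, max 0 (x - c) ∂S - ∫ x, max 0 (x - (c + 1 / ((n : ℝ) + 1))) ∂S) =
        ∫ x, ((n : ℝ) + 1) * (max 0 (x - c) - max 0 (x - (c + 1 / ((n : ℝ) + 1)))) ∂S := by
      intro n
      rw [integral_const_mul, integral_sub (hIntg S hS _) (hIntg S hS _)]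
    rw [e]
    simp_rw [e2]
    refine tendsto_integral_of_dominated_convergence (fun _ => (1 : ℝ)) ?_ (integrable_const _)
      ?_ ?_
    · intro n
      exact Continuous.aestronglyMeasurable (by fun_prop)
    · intro n
      refine ae_of_all _ fun x => ?_
      have hn : (0 : ℝ) < n + 1 := by positivity
      have hd : ((n : ℝ) + 1) * (1 / ((n : ℝ) + 1)) = 1 := by field_simp
      have hp : (0 : ℝ) < 1 / ((n : ℝ) + 1) := by positivity
      set δ := 1 / ((n : ℝ) + 1)
      have b1 : 0 ≤ max 0 (x - c) - max 0 (x - (c + δ)) := by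
        rw [sub_nonneg]; exact max_le_max le_rfl (by linarith)
      have b2 : max 0 (x - c) - max 0 (x - (c + δ)) ≤ δ := by
        have : max 0 (x - c) ≤ max 0 (x - (c + δ)) + δ :=
          max_le (by linarith [le_max_left 0 (x - (c + δ))])
            (by linarith [le_max_right 0 (x - (c + δ))])
        linarith
      rw [Real.norm_eq_abs, abs_of_nonneg (by positivity)]
      calc _ ≤ ((n : ℝ) + 1) * δ := by gcongr
        _ ≤ 1 := hd.le
    · refine ae_of_all _ fun x => ?_
      by_cases hx : c < x
      · rw [Set.indicator_of_mem (by exact hx)]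
        refine tendsto_const_nhds.congr' ?_
        have := (tendsto_one_div_add_atTop_nhds_zero_nat (𝕜 := ℝ)).eventually
          (gt_mem_nhds (sub_pos.2 hx))
        filter_upwards [this] with n hn
        rw [max_eq_right (by linarith), max_eq_right (by linarith)]
        have : (n : ℝ) + 1 ≠ 0 := by positivity
        field_simp
        ring
      · rw [Set.indicator_of_notMem (by exact hx)]
        refine tendsto_const_nhds.congr fun n => ?_
        have hp : (0 : ℝ) < 1 / ((n : ℝ) + 1) := by positivity
        rw [max_eq_left (by linarith), max_eq_left (by linarith)]
        simp
  refine Measure.ext_of_Iic P Q fun a => ?_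
  have h1 : P.real (Set.Ioi a) = Q.real (Set.Ioi a) := by
    refine tendsto_nhds_unique (lim P hP a) ?_
    simp_rw [h]
    exact lim Q hQ a
  have h2 : P.real (Set.Iic a) = Q.real (Set.Iic a) := by
    rw [← Set.compl_Ioi, probReal_compl_eq_one_sub measurableSet_Ioi,
      probReal_compl_eq_one_sub measurableSet_Ioi, h1]
  exact (measureReal_eq_measureReal_iff).1 h2

/-- The linear minimum appearing in the quantization error. -/
noncomputable def lmin (a b ξ : H) : ℝ :=
  min (‖a‖ ^ 2 - 2 * inner ℝ ξ a) (‖b‖ ^ 2 - 2 * inner ℝ ξ b)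

lemma lmin_weak (a b : H) : Continuous (fun ξ : WeakSpace ℝ H => lmin a b ξ) :=
  (continuous_const.sub ((weak_inner_cont a).const_mul 2)).min
    (continuous_const.sub ((weak_inner_cont b).const_mul 2))

lemma lin_sq (a ξ : H) : (‖a‖ ^ 2 - 2 * inner ℝ ξ a) ^ 2 ≤
    2 * ‖a‖ ^ 4 + 8 * ‖a‖ ^ 2 * ‖ξ‖ ^ 2 := by
  have h := abs_real_inner_le_norm ξ a
  have h2 : (inner ℝ ξ a : ℝ) ^ 2 ≤ ‖ξ‖ ^ 2 * ‖a‖ ^ 2 := by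
    rw [← sq_abs, ← mul_pow]; gcongr
  nlinarith [sq_nonneg (‖a‖ ^ 2 + 2 * inner ℝ ξ a)]

lemma lmin_sq (a b ξ : H) : lmin a b ξ ^ 2 ≤
    (2 * ‖a‖ ^ 4 + 2 * ‖b‖ ^ 4) + (8 * ‖a‖ ^ 2 + 8 * ‖b‖ ^ 2) * ‖ξ‖ ^ 2 := by
  have h1 := lin_sq a ξ
  have h2 := lin_sq b ξ
  have p1 : 0 ≤ 2 * ‖a‖ ^ 4 + 8 * ‖a‖ ^ 2 * ‖ξ‖ ^ 2 := by positivity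
  have p2 : 0 ≤ 2 * ‖b‖ ^ 4 + 8 * ‖b‖ ^ 2 * ‖ξ‖ ^ 2 := by positivity
  unfold lmin
  rcases min_choice (‖a‖ ^ 2 - 2 * inner ℝ ξ a) (‖b‖ ^ 2 - 2 * inner ℝ ξ b) with h | h <;>
    rw [h] <;> nlinarith

lemma integrable_of_sq (P : Measure H) [IsProbabilityMeasure P]
    (hP : Integrable (fun ξ => ‖ξ‖ ^ 2) P) (k : H → ℝ) (hk : Continuous k) (A B : ℝ)
    (hb : ∀ ξ, k ξ ^ 2 ≤ A + B * ‖ξ‖ ^ 2) : Integrable k P := by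
  refine integrable_lin P hP k hk (A + 1) B fun ξ => ?_
  have := hb ξ
  rw [abs_le]; constructor <;> nlinarith [sq_nonneg (k ξ - 1), sq_nonneg (k ξ + 1)]

lemma lmin_int (P : Measure H) [IsProbabilityMeasure P]
    (hP : Integrable (fun ξ => ‖ξ‖ ^ 2) P) (a b : H) : Integrable (lmin a b) P :=
  integrable_of_sq P hP _ (strong_of_weak (lmin_weak a b)) _ _ (lmin_sq a b)

lemma hilbert_unique [CompleteSpace H] [TopologicalSpace.SeparableSpace H]
    (P Q : Measure H) [IsProbabilityMeasure P] [IsProbabilityMeasure Q]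
    (hP : Integrable (fun ξ => ‖ξ‖ ^ 2) P) (hQ : Integrable (fun ξ => ‖ξ‖ ^ 2) Q)
    (h : ∀ a b : H, ∫ ξ, lmin a b ξ ∂P = ∫ ξ, lmin a b ξ ∂Q) : P = Q := by
  have := UniformSpace.secondCountable_of_separable H
  have hpos : ∀ a b : H, ∫ ξ, max 0 (2 * inner ℝ ξ (b - a) - (‖b‖ ^ 2 - ‖a‖ ^ 2)) ∂P =
      ∫ ξ, max 0 (2 * inner ℝ ξ (b - a) - (‖b‖ ^ 2 - ‖a‖ ^ 2)) ∂Q := by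
    intro a b
    have e : (fun ξ : H => max 0 (2 * inner ℝ ξ (b - a) - (‖b‖ ^ 2 - ‖a‖ ^ 2))) =
        fun ξ => lmin a a ξ - lmin a b ξ := by
      ext ξ
      simp only [lmin, min_self, inner_sub_right]
      rcases le_total (‖a‖ ^ 2 - 2 * inner ℝ ξ a) (‖b‖ ^ 2 - 2 * inner ℝ ξ b) with h | h
      · rw [min_eq_left h, max_eq_left (by linarith)]; ring
      · rw [min_eq_right h, max_eq_right (by linarith)]; ring
    rw [e, integral_sub (lmin_int P hP _ _) (lmin_int P hP _ _),
      integral_sub (lmin_int Q hQ _ _) (lmin_int Q hQ _ _), h, h]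
  have hpos2 : ∀ (u : H) (c : ℝ), ∫ ξ, max 0 (2 * inner ℝ ξ u - c) ∂P =
      ∫ ξ, max 0 (2 * inner ℝ ξ u - c) ∂Q := by
    intro u c
    by_cases hu : u = 0
    · subst hu; simp
    have hu' : ‖u‖ ^ 2 ≠ 0 := by positivity
    let t : ℝ := (c / ‖u‖ ^ 2 - 1) / 2
    have := hpos (t • u) ((t + 1) • u)
    have e1 : (t + 1) • u - t • u = u := by rw [← sub_smul]; simp
    have e2 : ‖(t + 1) • u‖ ^ 2 - ‖t • u‖ ^ 2 = c := by
      rw [norm_smul, norm_smul, mul_pow, mul_pow, Real.norm_eq_abs, Real.norm_eq_abs, sq_abs,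
        sq_abs]
      simp only [t]
      field_simp
      ring
    rwa [e1, e2] at this
  have hmap : ∀ t : H, P.map (fun ξ => (inner ℝ ξ t : ℝ)) = Q.map (fun ξ => (inner ℝ ξ t : ℝ)) := by
    intro t
    have mt : Measurable (fun ξ : H => (inner ℝ ξ t : ℝ)) := by fun_prop
    have ct : Continuous (fun ξ : H => (inner ℝ ξ t : ℝ)) := by fun_prop
    have := Measure.isProbabilityMeasure_map (μ := P) mt.aemeasurable
    have := Measure.isProbabilityMeasure_map (μ := Q) mt.aemeasurable
    have hIntg : ∀ (S : Measure H) [IsProbabilityMeasure S], Integrable (fun ξ => ‖ξ‖ ^ 2) S →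
        Integrable id (S.map (fun ξ => (inner ℝ ξ t : ℝ))) := by
      intro S _ hS
      rw [integrable_map_measure (by fun_prop) mt.aemeasurable]
      refine integrable_of_sq S hS _ ct 0 (‖t‖ ^ 2) fun ξ => ?_
      have h := abs_real_inner_le_norm ξ t
      have h2 : (inner ℝ ξ t : ℝ) ^ 2 ≤ ‖ξ‖ ^ 2 * ‖t‖ ^ 2 := by
        rw [← sq_abs, ← mul_pow]; gcongr
      change (inner ℝ ξ t : ℝ) ^ 2 ≤ _
      linarith
    refine real_unique _ _ (hIntg P hP) (hIntg Q hQ) fun c => ?_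
    rw [integral_map mt.aemeasurable (by fun_prop), integral_map mt.aemeasurable (by fun_prop)]
    have := hpos2 ((1 / 2 : ℝ) • t) c
    simpa [inner_smul_right] using this
  refine Measure.ext_of_charFun ?_
  ext t
  have mt : Measurable (fun ξ : H => (inner ℝ ξ t : ℝ)) := by fun_prop
  have e : ∀ S : Measure H, charFun S t =
      ∫ x : ℝ, Complex.exp (x * Complex.I) ∂(S.map (fun ξ => (inner ℝ ξ t : ℝ))) := by
    intro S
    rw [integral_map mt.aemeasurable (Continuous.aestronglyMeasurable (by fun_prop))]
    rfl
  rw [e, e, hmap]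

lemma pow_eq_ofReal (v : H) : (‖v‖₊ : ℝ≥0∞) ^ (2 : ℝ) = ENNReal.ofReal (‖v‖ ^ 2) := by
  rw [ENNReal.ofReal_pow (norm_nonneg _), ofReal_norm]
  norm_cast

lemma moment_iff (P : Measure H) :
    HasFiniteMoment 2 P ↔ Integrable (fun ξ => ‖ξ‖ ^ 2) P := by
  unfold HasFiniteMoment
  simp_rw [pow_eq_ofReal]
  have hm : AEStronglyMeasurable (fun ξ : H => ‖ξ‖ ^ 2) P :=
    (Measurable.aestronglyMeasurable (by fun_prop))
  constructor
  · intro h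
    refine ⟨hm, ?_⟩
    rw [hasFiniteIntegral_iff_ofReal (ae_of_all _ fun ξ => by positivity)]
    exact h.lt_top
  · intro h
    exact (hasFiniteIntegral_iff_ofReal (ae_of_all _ fun ξ => by positivity)).1 h.2 |>.ne

lemma quantErr_sq (P : Measure H) [IsProbabilityMeasure P]
    (hP : Integrable (fun ξ => ‖ξ‖ ^ 2) P) (x : Fin 2 → H) :
    quantErr 2 2 P x ^ 2 = ∫ ξ, ‖ξ‖ ^ 2 ∂P + ∫ ξ, lmin (x 0) (x 1) ξ ∂P := by
  have e : ∀ ξ : H, (⨅ i, (‖ξ - x i‖₊ : ℝ≥0∞) ^ (2 : ℝ)) =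
      ENNReal.ofReal (‖ξ‖ ^ 2 + lmin (x 0) (x 1) ξ) := by
    intro ξ
    simp_rw [pow_eq_ofReal]
    have : (⨅ i, ENNReal.ofReal (‖ξ - x i‖ ^ 2)) =
        min (ENNReal.ofReal (‖ξ - x 0‖ ^ 2)) (ENNReal.ofReal (‖ξ - x 1‖ ^ 2)) := by
      apply le_antisymm
      · exact le_min (iInf_le _ 0) (iInf_le _ 1)
      · refine le_iInf fun i => ?_
        fin_cases i
        · exact min_le_left _ _
        · exact min_le_right _ _
    rw [this, ← ENNReal.ofReal_mono.map_min]
    congr 1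
    unfold lmin
    rw [← min_add_add_left, norm_sub_sq_real, norm_sub_sq_real]
    congr 1 <;> ring
  have hnn : ∀ ξ : H, 0 ≤ ‖ξ‖ ^ 2 + lmin (x 0) (x 1) ξ := by
    intro ξ
    unfold lmin
    rw [← min_add_add_left]
    refine le_min ?_ ?_
    · have := norm_sub_sq_real ξ (x 0); nlinarith [sq_nonneg ‖ξ - x 0‖]
    · have := norm_sub_sq_real ξ (x 1); nlinarith [sq_nonneg ‖ξ - x 1‖]
  have hl := lmin_int P hP (x 0) (x 1)
  have hs : Integrable (fun ξ => ‖ξ‖ ^ 2 + lmin (x 0) (x 1) ξ) P := hP.add hl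
  unfold quantErr
  simp_rw [e]
  rw [← ofReal_integral_eq_lintegral_ofReal hs (ae_of_all _ hnn),
    ENNReal.toReal_ofReal (integral_nonneg hnn), ← Real.sqrt_eq_rpow,
    Real.sq_sqrt (integral_nonneg hnn), integral_add hP hl]

end aux2

theorem stmt14 {H : Type*} [NormedAddCommGroup H] [InnerProductSpace ℝ H]
    [CompleteSpace H] [TopologicalSpace.SeparableSpace H]
    [MeasurableSpace H] [BorelSpace H]
    (μ : ℕ → Measure H) [∀ n, IsProbabilityMeasure (μ n)]
    (hμ : ∀ n, HasFiniteMoment 2 (μ n))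
    (f : (Fin 2 → H) → ℝ) (hf₀ : ∀ x, 0 ≤ f x)
    (hf : ∀ x : Fin 2 → H, Tendsto (fun n => quantErr 2 2 (μ n) x) atTop (𝓝 (f x))) :
    ∃ μ' : Measure H, IsProbabilityMeasure μ' ∧ HasFiniteMoment 2 μ' ∧
      (∀ g : H → ℝ, (∃ Cg : ℝ, ∀ ξ, |g ξ| ≤ Cg) →
        Continuous (fun ξ : WeakSpace ℝ H => g ξ) →
        Tendsto (fun n => ∫ ξ, g ξ ∂(μ n)) atTop (𝓝 (∫ ξ, g ξ ∂μ'))) ∧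
      ∃ L : ℝ, Tendsto (fun n => ∫ ξ, ‖ξ‖ ^ 2 ∂(μ n)) atTop (𝓝 L) ∧
        ∀ x : Fin 2 → H,
          f x ^ 2 = quantErr 2 2 μ' x ^ 2 + L - ∫ ξ, ‖ξ‖ ^ 2 ∂μ' := by
  have hi : ∀ n, Integrable (fun ξ => ‖ξ‖ ^ 2) (μ n) := fun n => (moment_iff _).1 (hμ n)
  have hsq : ∀ x : Fin 2 → H, Tendsto (fun n => ∫ ξ, ‖ξ‖ ^ 2 ∂(μ n) +
      ∫ ξ, lmin (x 0) (x 1) ξ ∂(μ n)) atTop (𝓝 (f x ^ 2)) := fun x =>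
    ((hf x).pow 2).congr fun n => quantErr_sq (μ n) (hi n) x
  have hL : Tendsto (fun n => ∫ ξ, ‖ξ‖ ^ 2 ∂(μ n)) atTop (𝓝 (f 0 ^ 2)) := by
    have := hsq 0
    simpa [lmin] using this
  obtain ⟨M, hM⟩ := hL.bddAbove_range
  have hM' : ∀ n, ∫ ξ, ‖ξ‖ ^ 2 ∂(μ n) ≤ M := fun n => hM ⟨n, rfl⟩
  have hlm : ∀ x : Fin 2 → H, Tendsto (fun n => ∫ ξ, lmin (x 0) (x 1) ξ ∂(μ n)) atTop
      (𝓝 (f x ^ 2 - f 0 ^ 2)) := fun x => by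
    have := (hsq x).sub hL
    simpa using this
  have main : ∀ U : Ultrafilter ℕ, (U : Filter ℕ) ≤ atTop → ∃ ν : Measure H,
      IsProbabilityMeasure ν ∧ Integrable (fun ξ => ‖ξ‖ ^ 2) ν ∧ WConv U μ ν ∧
      ∀ x : Fin 2 → H, ∫ ξ, lmin (x 0) (x 1) ξ ∂ν = f x ^ 2 - f 0 ^ 2 := by
    intro U hU
    obtain ⟨ν, hν, hw⟩ := exists_limit μ M.toNNReal (fun n => by
      rw [← ofReal_integral_eq_lintegral_ofReal (hi n) (ae_of_all _ fun ξ => by positivity)]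
      exact ENNReal.ofReal_le_ofReal (hM' n)) U
    have h2 := weak_second_moment μ M hi hM' U ν hw
    have hνi : Integrable (fun ξ => ‖ξ‖ ^ 2) ν := by
      rw [← moment_iff]
      unfold HasFiniteMoment
      simp_rw [pow_eq_ofReal]
      exact (h2.trans_lt ENNReal.ofReal_lt_top).ne
    have hM0 : 0 ≤ M := (integral_nonneg fun ξ => by positivity).trans (hM' 0)
    have hνM : ∫ ξ, ‖ξ‖ ^ 2 ∂ν ≤ M := by
      rw [← ofReal_integral_eq_lintegral_ofReal hνi (ae_of_all _ fun ξ => by positivity)] at h2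
      exact (ENNReal.ofReal_le_ofReal_iff hM0).1 h2
    refine ⟨ν, hν, hνi, hw, fun x => ?_⟩
    have t1 := wconv_ui μ M hi hM' U ν hw hνi hνM _ (lmin_weak (x 0) (x 1)) _ _
      (by positivity) (by positivity) (lmin_sq (x 0) (x 1))
    exact tendsto_nhds_unique t1 ((hlm x).mono_left hU)
  obtain ⟨ν, hν, hνi, -, hνx⟩ := main (Ultrafilter.of atTop) (Ultrafilter.of_le _)
  refine ⟨ν, hν, (moment_iff ν).2 hνi, ?_, f 0 ^ 2, hL, fun x => ?_⟩
  · intro g hgb hgc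
    rw [tendsto_iff_ultrafilter]
    intro U hU
    obtain ⟨ν', hν', hνi', hw', hνx'⟩ := main U hU
    have : ν' = ν := hilbert_unique ν' ν hνi' hνi fun a b => by
      have e1 := hνx ![a, b]
      have e2 := hνx' ![a, b]
      simp only [Matrix.cons_val_zero, Matrix.cons_val_one] at e1 e2
      rw [e1, e2]
    subst this
    exact hw' g hgb hgc
  · rw [quantErr_sq ν hνi x, hνx x]
    ring
end

section
/- (Dimension one, even integer order p, N = 2.) Let p ≥ 2 be an even integer. (a) If μ, ν are Borel probability measures on ℝ with finite p-th moments and there exists a real constant C such that e_{2,p}(μ, (a,b)) = e_{2,p}(ν, (a,b)) + C for all (a, b) ∈ ℝ², then μ = ν. (b) If μ_n (n ≥ 1) and μ_∞ are Borel probability measures on ℝ with finite p-th moments, the following are equivalent: (i) W_p(μ_n, μ_∞) → 0; (ii) e_{2,p}(μ_n, ·) → e_{2,p}(μ_∞, ·) uniformly on ℝ²; (iii) e_{2,p}(μ_n, ·) → e_{2,p}(μ_∞, ·) pointwise on ℝ². -/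
open MeasureTheory Filter Topology
open scoped ENNReal NNReal

/-- The `L^p`-Wasserstein distance. -/
noncomputable def wassersteinDist {E : Type*} [NormedAddCommGroup E] [MeasurableSpace E]
    (p : ℝ) (μ ν : Measure E) : ℝ :=
  (⨅ π ∈ {π : Measure (E × E) | π.map Prod.fst = μ ∧ π.map Prod.snd = ν},
      ∫⁻ q, (‖q.1 - q.2‖₊ : ℝ≥0∞) ^ p ∂π).toReal ^ (1 / p)

lemma interp_aux (p : ℕ) (hp : 2 ≤ p) (hpeven : Even p) :
    ∃ w : ℕ → ℝ, ∀ η : ℝ,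
      ∑ i ∈ Finset.range p, w i * ((η + i) ^ p - (η - i) ^ p) = 2 * p * η := by
  classical
  have hinj : Set.InjOn (fun i : ℕ => (i : ℝ)) (Finset.range p : Finset ℕ) :=
    fun a _ b _ h => Nat.cast_injective (R := ℝ) h
  refine ⟨fun i => (Lagrange.basis (Finset.range p) (fun i : ℕ => (i : ℝ)) i).coeff (p - 1), ?_⟩
  intro η
  set q : Polynomial ℝ := (Polynomial.X + Polynomial.C η) ^ p - (Polynomial.X - Polynomial.C η) ^ p
    with hq
  have hdeg : q.degree < (Finset.range p).card := by
    have h1 : ((Polynomial.X + Polynomial.C η) ^ p : Polynomial ℝ).degree = p := by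
      rw [Polynomial.degree_pow, Polynomial.degree_X_add_C]; simp
    have h2 : ((Polynomial.X - Polynomial.C η) ^ p : Polynomial ℝ).degree = p := by
      rw [Polynomial.degree_pow, Polynomial.degree_X_sub_C]; simp
    rw [Finset.card_range, ← h1]
    apply Polynomial.degree_sub_lt_left (h1.trans h2.symm)
    · exact pow_ne_zero _ (Polynomial.X_add_C_ne_zero η)
    · rw [((Polynomial.monic_X_add_C η).pow p).leadingCoeff,
        ((Polynomial.monic_X_sub_C η).pow p).leadingCoeff]
  have hc : q.coeff (p - 1) = 2 * p * η := by
    obtain ⟨k, rfl⟩ : ∃ k, p = k + 1 := ⟨p - 1, by omega⟩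
    rw [hq, Polynomial.coeff_sub, sub_eq_add_neg Polynomial.X, ← Polynomial.C_neg,
      Polynomial.coeff_X_add_C_pow, Polynomial.coeff_X_add_C_pow]
    simp
    ring
  rw [← hc]
  conv_rhs => rw [Lagrange.eq_interpolate hinj hdeg, Lagrange.interpolate_apply]
  rw [Polynomial.finsetSum_coeff]
  refine Finset.sum_congr rfl fun i _ => ?_
  rw [Polynomial.coeff_C_mul, mul_comm]
  congr 1
  simp only [hq, Polynomial.eval_sub, Polynomial.eval_pow, Polynomial.eval_add, Polynomial.eval_X,
    Polynomial.eval_C]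
  rw [add_comm η, ← hpeven.neg_pow (η - i)]
  ring

lemma memLp_of_moment (p : ℕ) (hp : 2 ≤ p) {μ : Measure ℝ} 
    (h : HasFiniteMoment (p : ℝ) μ) : MemLp (fun x : ℝ => x) p μ := by
  refine ⟨measurable_id.aestronglyMeasurable, ?_⟩
  have hp0 : (p : ℝ≥0∞) ≠ 0 := by simp; omega
  rw [eLpNorm_lt_top_iff_lintegral_rpow_enorm_lt_top hp0 (by simp)]
  unfold HasFiniteMoment at h
  simpa [enorm_eq_nnnorm] using lt_top_iff_ne_top.2 h

lemma integrable_pow (p : ℕ) (hp : 2 ≤ p) (hpeven : Even p) {μ : Measure ℝ} [IsProbabilityMeasure μ]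
    (h : HasFiniteMoment (p : ℝ) μ) (a : ℝ) : Integrable (fun x : ℝ => (x - a) ^ p) μ := by
  have h1 : MemLp (fun x : ℝ => x - a) p μ := (memLp_of_moment p hp h).sub (memLp_const a)
  have := h1.integrable_norm_pow (by omega)
  simpa [Real.norm_eq_abs, hpeven.pow_abs] using this

def mm (p : ℕ) (a b : ℝ) (x : ℝ) : ℝ := min ((x - a) ^ p) ((x - b) ^ p)

lemma mm_nonneg (p : ℕ) (hpeven : Even p) (a b x : ℝ) : 0 ≤ mm p a b x :=
  le_min (hpeven.pow_nonneg _) (hpeven.pow_nonneg _)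

lemma integrable_mm (p : ℕ) (hp : 2 ≤ p) (hpeven : Even p) {μ : Measure ℝ} [IsProbabilityMeasure μ]
    (h : HasFiniteMoment (p : ℝ) μ) (a b : ℝ) : Integrable (mm p a b) μ :=
  (integrable_pow p hp hpeven h a).inf (integrable_pow p hp hpeven h b)

lemma nn_pow (p : ℕ) (hpeven : Even p) (y : ℝ) :
    (‖y‖₊ : ℝ≥0∞) ^ (p : ℝ) = ENNReal.ofReal (y ^ p) := by
  rw [ENNReal.rpow_natCast, ← enorm_eq_nnnorm, Real.enorm_eq_ofReal_abs,
    ← ENNReal.ofReal_pow (abs_nonneg _), hpeven.pow_abs]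

lemma lint_eq (p : ℕ) (hp : 2 ≤ p) (hpeven : Even p) {μ : Measure ℝ} [IsProbabilityMeasure μ]
    (h : HasFiniteMoment (p : ℝ) μ) (x : Fin 2 → ℝ) :
    ∫⁻ ξ, ⨅ i, (‖ξ - x i‖₊ : ℝ≥0∞) ^ (p : ℝ) ∂μ = ENNReal.ofReal (∫ ξ, mm p (x 0) (x 1) ξ ∂μ) := by
  rw [ofReal_integral_eq_lintegral_ofReal (integrable_mm p hp hpeven h _ _)
    (ae_of_all _ fun _ => mm_nonneg p hpeven _ _ _)]
  refine lintegral_congr fun ξ => ?_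
  simp only [nn_pow p hpeven, mm]
  rw [(ENNReal.ofReal_mono).map_min]
  apply le_antisymm
  · exact le_min (iInf_le _ 0) (iInf_le _ 1)
  · refine le_iInf fun i => ?_
    fin_cases i
    · exact min_le_left _ _
    · exact min_le_right _ _

lemma quantErr_eq (p : ℕ) (hp : 2 ≤ p) (hpeven : Even p) {μ : Measure ℝ} [IsProbabilityMeasure μ]
    (h : HasFiniteMoment (p : ℝ) μ) (x : Fin 2 → ℝ) :
    quantErr (p : ℝ) 2 μ x = (∫ ξ, mm p (x 0) (x 1) ξ ∂μ) ^ (1 / (p : ℝ)) := by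
  unfold quantErr
  rw [lint_eq p hp hpeven h, ENNReal.toReal_ofReal (integral_nonneg fun _ => mm_nonneg p hpeven _ _ _)]

lemma quantErr_pow (p : ℕ) (hp : 2 ≤ p) (hpeven : Even p) {μ : Measure ℝ} [IsProbabilityMeasure μ]
    (h : HasFiniteMoment (p : ℝ) μ) (x : Fin 2 → ℝ) :
    quantErr (p : ℝ) 2 μ x ^ p = ∫ ξ, mm p (x 0) (x 1) ξ ∂μ := by
  rw [quantErr_eq p hp hpeven h, one_div, Real.rpow_inv_natCast_pow _ (by omega)]
  exact integral_nonneg fun _ => mm_nonneg p hpeven _ _ _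

lemma pos_eq (p : ℕ) (hp : 2 ≤ p) (hpeven : Even p) : ∃ w : ℕ → ℝ, ∀ c x : ℝ,
    max (x - c) 0 = ∑ i ∈ Finset.range p, w i * (mm p (c - i) (c - i) x - mm p (c - i) (c + i) x) := by
  obtain ⟨w, hw⟩ := interp_aux p hp hpeven
  refine ⟨fun i => w i / (2 * p), fun c x => ?_⟩
  have hp' : (0:ℝ) < p := by exact_mod_cast (by omega : 0 < p)
  have key : ∀ i : ℕ, x ≤ c → mm p (c - i) (c + i) x = (x - (c - i)) ^ p := by
    intro i hx
    apply min_eq_left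
    have := Nat.cast_nonneg (α := ℝ) i
    rw [← hpeven.pow_abs, ← hpeven.pow_abs (x - (c + i))]
    refine pow_le_pow_left₀ (abs_nonneg _) ?_ _
    rw [← sq_le_sq]; nlinarith
  have key' : ∀ i : ℕ, c ≤ x → mm p (c - i) (c + i) x = (x - (c + i)) ^ p := by
    intro i hx
    apply min_eq_right
    have := Nat.cast_nonneg (α := ℝ) i
    rw [← hpeven.pow_abs, ← hpeven.pow_abs (x - (c - i))]
    refine pow_le_pow_left₀ (abs_nonneg _) ?_ _
    rw [← sq_le_sq]; nlinarith
  rcases le_total x c with hx | hx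
  · rw [max_eq_right (by linarith)]
    symm
    refine Finset.sum_eq_zero fun i _ => ?_
    rw [key i hx]; simp [mm]
  · rw [max_eq_left (by linarith)]
    have := hw (x - c)
    have h2 : x - c = (∑ i ∈ Finset.range p, w i * ((x - c + i) ^ p - (x - c - i) ^ p)) / (2 * p) := by
      rw [this]; field_simp
    rw [h2, Finset.sum_div]
    refine Finset.sum_congr rfl fun i _ => ?_
    rw [key' i hx]; simp only [mm, min_self]
    rw [← sub_add, ← sub_sub]
    ring

lemma tendsto_pos (p : ℕ) (hp : 2 ≤ p) (hpeven : Even p) {μ : ℕ → Measure ℝ} {μ' : Measure ℝ}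
      [∀ n, IsProbabilityMeasure (μ n)] [IsProbabilityMeasure μ']
      (hm : ∀ n, HasFiniteMoment (p : ℝ) (μ n)) (hm' : HasFiniteMoment (p : ℝ) μ')
      (H : ∀ a b, Tendsto (fun n => ∫ ξ, mm p a b ξ ∂(μ n)) atTop (𝓝 (∫ ξ, mm p a b ξ ∂μ'))) (c : ℝ) :
      Tendsto (fun n => ∫ ξ, max (ξ - c) 0 ∂(μ n)) atTop (𝓝 (∫ ξ, max (ξ - c) 0 ∂μ')) := by
  obtain ⟨w, hw⟩ := pos_eq p hp hpeven
  have : ∀ (ν : Measure ℝ) [IsProbabilityMeasure ν] (_ : HasFiniteMoment (p : ℝ) ν),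
      ∫ ξ, max (ξ - c) 0 ∂ν = ∑ i ∈ Finset.range p,
        w i * (∫ ξ, mm p (c - i) (c - i) ξ ∂ν - ∫ ξ, mm p (c - i) (c + i) ξ ∂ν) := by
    intro ν _ hν
    simp_rw [hw]
    have hi : ∀ i ∈ Finset.range p, Integrable (fun ξ =>
        w i * (mm p (c - i) (c - i) ξ - mm p (c - i) (c + i) ξ)) ν := fun i _ =>
      Integrable.const_mul (Integrable.sub (integrable_mm p hp hpeven hν _ _)
        (integrable_mm p hp hpeven hν _ _)) _
    rw [integral_finsetSum _ hi]
    refine Finset.sum_congr rfl fun i _ => ?_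
    rw [integral_const_mul, integral_sub (integrable_mm p hp hpeven hν _ _) (integrable_mm p hp hpeven hν _ _)]
  rw [this μ' hm']
  simp_rw [fun n => this (μ n) (hm n)]
  exact tendsto_finsetSum _ fun i _ => ((H _ _).sub (H _ _)).const_mul _

open ProbabilityTheory in
lemma cdf_ramp {μ : Measure ℝ} [IsProbabilityMeasure μ] (hi : Integrable (fun x : ℝ => x) μ)
    {x y : ℝ} (hxy : x < y) :
    cdf μ x ≤ 1 - (∫ ξ, max (ξ - x) 0 ∂μ - ∫ ξ, max (ξ - y) 0 ∂μ) / (y - x) ∧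
    1 - (∫ ξ, max (ξ - x) 0 ∂μ - ∫ ξ, max (ξ - y) 0 ∂μ) / (y - x) ≤ cdf μ y := by
  have hI : ∀ c : ℝ, Integrable (fun ξ : ℝ => max (ξ - c) 0) μ := fun c =>
    (hi.sub (integrable_const c)).sup (integrable_const 0)
  have hd : 0 < y - x := by linarith
  have hR : 1 - (∫ ξ, max (ξ - x) 0 ∂μ - ∫ ξ, max (ξ - y) 0 ∂μ) / (y - x)
      = ∫ ξ, (1 - (max (ξ - x) 0 - max (ξ - y) 0) / (y - x)) ∂μ := by
    have hID : Integrable (fun ξ : ℝ => (max (ξ - x) 0 - max (ξ - y) 0) / (y - x)) μ :=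
      ((hI x).sub (hI y)).div_const _
    rw [integral_sub (integrable_const 1) hID, integral_div,
      integral_sub (hI x) (hI y)]
    simp
  have hRi : Integrable (fun ξ : ℝ => (1 - (max (ξ - x) 0 - max (ξ - y) 0) / (y - x))) μ :=
    (integrable_const 1).sub (((hI x).sub (hI y)).div_const _)
  have hind : ∀ c : ℝ, Integrable ((Set.Iic c).indicator (1 : ℝ → ℝ)) μ := fun c =>
    (integrable_const (1:ℝ)).indicator measurableSet_Iic
  rw [hR, cdf_eq_real, cdf_eq_real, ← integral_indicator_one measurableSet_Iic,
    ← integral_indicator_one measurableSet_Iic]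
  constructor
  · refine integral_mono (hind x) hRi fun ξ => ?_
    by_cases h : ξ ≤ x
    · simp only [Set.indicator, Set.mem_Iic, h, if_true, Pi.one_apply]
      rw [max_eq_right (by linarith), max_eq_right (by linarith)]; simp
    · simp only [Set.indicator, Set.mem_Iic, h, if_false]
      push Not at h
      rw [sub_nonneg, div_le_one hd, max_eq_left (by linarith)]
      have := le_max_left (ξ - y) 0
      linarith
  · refine integral_mono hRi (hind y) fun ξ => ?_
    by_cases h : ξ ≤ y
    · simp only [Set.indicator, Set.mem_Iic, h, if_true, Pi.one_apply]
      rw [max_eq_right (by linarith : ξ - y ≤ 0)]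
      have : 0 ≤ (max (ξ - x) 0 - 0) / (y - x) := by
        have := le_max_right (ξ - x) 0
        apply div_nonneg <;> linarith
      linarith
    · simp only [Set.indicator, Set.mem_Iic, h, if_false]
      push Not at h
      rw [max_eq_left (by linarith), max_eq_left (by linarith)]
      rw [show ξ - x - (ξ - y) = y - x by ring, div_self hd.ne']; simp

noncomputable def qtl (μ : Measure ℝ) (u : ℝ) : ℝ := sInf {x | u ≤ ProbabilityTheory.cdf μ x}

open ProbabilityTheory in
lemma qtl_le_iff {μ : Measure ℝ} {u : ℝ} (hu : u ∈ Set.Ioo (0:ℝ) 1) (x : ℝ) :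
    qtl μ u ≤ x ↔ u ≤ cdf μ x := by
  have hne : {x | u ≤ cdf μ x}.Nonempty := by
    obtain ⟨x, hx⟩ := ((tendsto_cdf_atTop μ).eventually (lt_mem_nhds hu.2)).exists
    exact ⟨x, hx.le⟩
  have hbd : BddBelow {x | u ≤ cdf μ x} := by
    obtain ⟨x, hx⟩ := ((tendsto_cdf_atBot μ).eventually (gt_mem_nhds hu.1)).exists
    refine ⟨x, fun y hy => ?_⟩
    by_contra! h
    have := monotone_cdf μ h.le
    simp only [Set.mem_ofPred_eq] at hy
    linarith
  constructor
  · intro h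
    refine le_trans ?_ (monotone_cdf μ h)
    have hc : Tendsto (cdf μ) (𝓝[>] (qtl μ u)) (𝓝 (cdf μ (qtl μ u))) :=
      ((cdf μ).right_continuous (qtl μ u)).mono Set.Ioi_subset_Ici_self
    refine ge_of_tendsto hc ?_
    filter_upwards [self_mem_nhdsWithin] with y hy
    obtain ⟨s, hs, hsy⟩ := exists_lt_of_csInf_lt hne hy
    exact le_trans hs (monotone_cdf μ hsy.le)
  · intro h
    exact csInf_le hbd h

lemma qtl_mono (μ : Measure ℝ) : MonotoneOn (qtl μ) (Set.Ioo (0:ℝ) 1) := by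
  intro u hu v hv huv
  rw [qtl_le_iff hu]
  exact huv.trans ((qtl_le_iff hv _).1 le_rfl)

lemma qtl_aem (μ : Measure ℝ) : AEMeasurable (qtl μ) (volume.restrict (Set.Ioo (0:ℝ) 1)) :=
  aemeasurable_restrict_of_monotoneOn measurableSet_Ioo (qtl_mono μ)

open ProbabilityTheory in
lemma qtl_map (μ : Measure ℝ) [IsProbabilityMeasure μ] :
    (volume.restrict (Set.Ioo (0:ℝ) 1)).map (qtl μ) = μ := by
  have : IsFiniteMeasure ((volume.restrict (Set.Ioo (0:ℝ) 1)).map (qtl μ)) := inferInstance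
  refine Measure.ext_of_Iic _ _ fun x => ?_
  rw [Measure.map_apply_of_aemeasurable (qtl_aem μ) measurableSet_Iic,
    Measure.restrict_apply' measurableSet_Ioo, ← ofReal_cdf]
  have h0 := cdf_nonneg μ x
  have h1 := cdf_le_one μ x
  apply le_antisymm
  · calc _ ≤ volume (Set.Ioc 0 (cdf μ x)) := by
          apply measure_mono
          rintro u ⟨hu, hu'⟩
          exact ⟨hu'.1, (qtl_le_iff hu' x).1 hu⟩
      _ = _ := by simp
  · calc _ = volume (Set.Ioo 0 (cdf μ x)) := by simp
      _ ≤ _ := by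
          apply measure_mono
          rintro u ⟨hu, hu'⟩
          have : u ∈ Set.Ioo (0:ℝ) 1 := ⟨hu, by linarith⟩
          exact ⟨(qtl_le_iff this x).2 hu'.le, this⟩

open ProbabilityTheory in
lemma qtl_tendsto {μ : ℕ → Measure ℝ} {μ' : Measure ℝ}
      [∀ n, IsProbabilityMeasure (μ n)] [IsProbabilityMeasure μ']
      (hm : ∀ n, Integrable (fun x : ℝ => x) (μ n)) (hm' : Integrable (fun x : ℝ => x) μ')
      (H : ∀ c : ℝ, Tendsto (fun n => ∫ ξ, max (ξ - c) 0 ∂(μ n)) atTop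
        (𝓝 (∫ ξ, max (ξ - c) 0 ∂μ'))) :
    ∀ᵐ u ∂(volume.restrict (Set.Ioo (0:ℝ) 1)),
      Tendsto (fun n => qtl (μ n) u) atTop (𝓝 (qtl μ' u)) := by
  have HR : ∀ x y : ℝ, Tendsto (fun n => 1 - (∫ ξ, max (ξ - x) 0 ∂(μ n) - ∫ ξ, max (ξ - y) 0 ∂(μ n)) / (y - x))
      atTop (𝓝 (1 - (∫ ξ, max (ξ - x) 0 ∂μ' - ∫ ξ, max (ξ - y) 0 ∂μ') / (y - x))) := fun x y =>
    (((H x).sub (H y)).div_const _).const_sub 1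
  have hcount := (qtl_mono μ').countable_not_continuousWithinAt
  have hae := hcount.ae_notMem (volume.restrict (Set.Ioo (0:ℝ) 1))
  filter_upwards [hae, ae_restrict_mem measurableSet_Ioo] with u hu hu01
  have hcont : ContinuousWithinAt (qtl μ') (Set.Ioo 0 1) u := by
    by_contra h
    exact hu ⟨hu01, h⟩
  rw [tendsto_order]
  constructor
  · intro y hy
    obtain ⟨x, hyx, hx⟩ := exists_between hy
    have hF : cdf μ' x < u := by
      by_contra! h
      exact absurd ((qtl_le_iff hu01 x).2 h) (not_le.2 hx)
    have := (cdf_ramp hm' hyx).2.trans_lt hF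
    filter_upwards [(HR y x).eventually (gt_mem_nhds this)] with n hn
    have := (cdf_ramp (hm n) hyx).1.trans_lt hn
    by_contra! h
    exact absurd ((qtl_le_iff hu01 y).1 h) (not_le.2 this)
  · intro y hy
    obtain ⟨z, hz1, hz⟩ := exists_between hy
    have hcont' : ContinuousAt (qtl μ') u := hcont.continuousAt (Ioo_mem_nhds hu01.1 hu01.2)
    have hev : ∀ᶠ v in 𝓝[>] u, qtl μ' v < z :=
      (hcont'.eventually (gt_mem_nhds hz1)).filter_mono nhdsWithin_le_nhds
    have hev2 : ∀ᶠ v in 𝓝[>] u, v < 1 := (gt_mem_nhds hu01.2).filter_mono nhdsWithin_le_nhds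
    obtain ⟨v, hv, hv1, hvu⟩ := (hev.and (hev2.and self_mem_nhdsWithin)).exists
    have hvu : u < v := hvu
    have hF : u < cdf μ' z := hvu.trans_le ((qtl_le_iff ⟨hu01.1.trans hvu, hv1⟩ z).1 hv.le)
    obtain ⟨y', hy1, hy2⟩ := exists_between hz
    have := hF.trans_le (cdf_ramp hm' hy1).1
    filter_upwards [(HR z y').eventually (lt_mem_nhds this)] with n hn
    have := hn.trans_le (cdf_ramp (hm n) hy1).2
    exact ((qtl_le_iff hu01 y').2 this.le).trans_lt hy2

lemma fatou_Lp (p : ℕ) (hp : 2 ≤ p) (hpeven : Even p) {lam : Measure ℝ} [IsFiniteMeasure lam]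
    {X : ℕ → ℝ → ℝ} {X' : ℝ → ℝ} (hX : ∀ n, MemLp (X n) p lam) (hX' : MemLp X' p lam)
    (hae : ∀ᵐ u ∂lam, Tendsto (fun n => X n u) atTop (𝓝 (X' u)))
    (hint : Tendsto (fun n => ∫ u, X n u ^ p ∂lam) atTop (𝓝 (∫ u, X' u ^ p ∂lam))) :
    Tendsto (fun n => ∫ u, (X n u - X' u) ^ p ∂lam) atTop (𝓝 0) := by
  have hI : ∀ {Y : ℝ → ℝ}, MemLp Y p lam → Integrable (fun u => Y u ^ p) lam := by
    intro Y hY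
    have := hY.integrable_norm_pow (by omega)
    simpa [Real.norm_eq_abs, hpeven.pow_abs] using this
  have hD : ∀ n, Integrable (fun u => (X n u - X' u) ^ p) lam := fun n => hI ((hX n).sub hX')
  have hg : ∀ n u, 0 ≤ 2 ^ (p - 1) * (X n u ^ p + X' u ^ p) - (X n u - X' u) ^ p := by
    intro n u
    have := hpeven.add_pow_le (a := X n u) (b := - X' u)
    rw [hpeven.neg_pow, ← sub_eq_add_neg] at this
    linarith
  have hB : ∀ n, Integrable (fun u => 2 ^ (p - 1) * (X n u ^ p + X' u ^ p)) lam := fun n =>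
    ((hI (hX n)).add (hI hX')).const_mul _
  have hgi : ∀ n, Integrable (fun u => 2 ^ (p - 1) * (X n u ^ p + X' u ^ p) - (X n u - X' u) ^ p) lam :=
    fun n => (hB n).sub (hD n)
  set A : ℝ := ∫ u, 2 ^ (p - 1) * (X' u ^ p + X' u ^ p) ∂lam with hA
  have hBt : Tendsto (fun n => ∫ u, 2 ^ (p - 1) * (X n u ^ p + X' u ^ p) ∂lam) atTop (𝓝 A) := by
    simp_rw [hA, integral_const_mul, fun n => integral_add (hI (hX n)) (hI hX'),
      integral_add (hI hX') (hI hX')]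
    exact (hint.add_const _).const_mul _
  have hAi : Integrable (fun u => 2 ^ (p - 1) * (X' u ^ p + X' u ^ p)) lam :=
    ((hI hX').add (hI hX')).const_mul _
  have hfat : ENNReal.ofReal A ≤ liminf (fun n => ENNReal.ofReal
      (∫ u, (2 ^ (p - 1) * (X n u ^ p + X' u ^ p) - (X n u - X' u) ^ p) ∂lam)) atTop := by
    rw [hA, ofReal_integral_eq_lintegral_ofReal hAi (ae_of_all _ fun u => by
      have := hpeven.pow_nonneg (X' u); positivity)]
    simp_rw [fun n => ofReal_integral_eq_lintegral_ofReal (hgi n) (ae_of_all _ (hg n))]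
    refine le_trans (le_of_eq ?_) (lintegral_liminf_le' fun n => (hgi n).1.aemeasurable.ennreal_ofReal)
    refine lintegral_congr_ae ?_
    filter_upwards [hae] with u hu
    symm
    apply Tendsto.liminf_eq
    apply (ENNReal.continuous_ofReal.tendsto _).comp
    have : Tendsto (fun n => 2 ^ (p - 1) * (X n u ^ p + X' u ^ p) - (X n u - X' u) ^ p) atTop
        (𝓝 (2 ^ (p - 1) * (X' u ^ p + X' u ^ p) - (X' u - X' u) ^ p)) :=
      (((hu.pow p).add_const _).const_mul _).sub ((hu.sub_const _).pow p)
    simpa [show p ≠ 0 by omega] using this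
  rw [tendsto_order]
  constructor
  · intro y hy
    exact Eventually.of_forall fun n => hy.trans_le (integral_nonneg fun u => hpeven.pow_nonneg _)
  · intro e he
    have hev1 := hBt.eventually (gt_mem_nhds (show A < A + e / 2 by linarith))
    have hev2 : ∀ᶠ n in atTop, A - e / 2 <
        ∫ u, (2 ^ (p - 1) * (X n u ^ p + X' u ^ p) - (X n u - X' u) ^ p) ∂lam := by
      rcases lt_or_ge (A - e / 2) 0 with h | h
      · exact Eventually.of_forall fun n => h.trans_le (integral_nonneg (hg n))
      · have hlt : ENNReal.ofReal (A - e / 2) < ENNReal.ofReal A :=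
          (ENNReal.ofReal_lt_ofReal_iff (by linarith)).2 (by linarith)
        filter_upwards [eventually_lt_of_lt_liminf (hlt.trans_le hfat)] with n hn
        exact (ENNReal.ofReal_lt_ofReal_iff_of_nonneg h).1 hn
    filter_upwards [hev1, hev2] with n h1 h2
    rw [integral_sub (hB n) (hD n)] at h2
    linarith

lemma qtl_memLp (p : ℕ) (hp : 2 ≤ p) {μ : Measure ℝ} [IsProbabilityMeasure μ]
    (h : HasFiniteMoment (p : ℝ) μ) : MemLp (qtl μ) p (volume.restrict (Set.Ioo (0:ℝ) 1)) := by
  have h1 := memLp_of_moment p hp h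
  rw [← qtl_map μ, memLp_map_measure_iff (by fun_prop) (qtl_aem μ)] at h1
  exact h1

lemma qtl_int (p : ℕ) (μ : Measure ℝ) [IsProbabilityMeasure μ] :
    ∫ u in Set.Ioo (0:ℝ) 1, qtl μ u ^ p = ∫ x, x ^ p ∂μ := by
  conv_rhs => rw [← qtl_map μ, integral_map (qtl_aem μ) (by fun_prop)]

lemma wass_inf_le (p : ℕ) (hp : 2 ≤ p) (hpeven : Even p) {μ ν : Measure ℝ} [IsProbabilityMeasure μ]
    [IsProbabilityMeasure ν] (h : HasFiniteMoment (p : ℝ) μ) (h' : HasFiniteMoment (p : ℝ) ν) :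
    (⨅ π ∈ {π : Measure (ℝ × ℝ) | π.map Prod.fst = μ ∧ π.map Prod.snd = ν},
      ∫⁻ q, (‖q.1 - q.2‖₊ : ℝ≥0∞) ^ (p : ℝ) ∂π) ≤
      ENNReal.ofReal (∫ u in Set.Ioo (0:ℝ) 1, (qtl μ u - qtl ν u) ^ p) := by
  have hm : AEMeasurable (fun u => (qtl μ u, qtl ν u)) (volume.restrict (Set.Ioo (0:ℝ) 1)) :=
    (qtl_aem μ).prodMk (qtl_aem ν)
  refine iInf₂_le_of_le ((volume.restrict (Set.Ioo (0:ℝ) 1)).map (fun u => (qtl μ u, qtl ν u)))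
    ⟨?_, ?_⟩ ?_
  · rw [AEMeasurable.map_map_of_aemeasurable measurable_fst.aemeasurable hm]
    exact qtl_map μ
  · rw [AEMeasurable.map_map_of_aemeasurable measurable_snd.aemeasurable hm]
    exact qtl_map ν
  · rw [lintegral_map' (by fun_prop) hm]
    have hi : Integrable (fun u => (qtl μ u - qtl ν u) ^ p) (volume.restrict (Set.Ioo (0:ℝ) 1)) := by
      have := ((qtl_memLp p hp h).sub (qtl_memLp p hp h')).integrable_norm_pow (by omega)
      simpa [Real.norm_eq_abs, hpeven.pow_abs] using this
    rw [ofReal_integral_eq_lintegral_ofReal hi (ae_of_all _ fun u => hpeven.pow_nonneg _)]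
    simp only [nn_pow p hpeven, le_refl]

lemma wass_le (p : ℕ) (hp : 2 ≤ p) (hpeven : Even p) {μ ν : Measure ℝ} [IsProbabilityMeasure μ]
    [IsProbabilityMeasure ν] (h : HasFiniteMoment (p : ℝ) μ) (h' : HasFiniteMoment (p : ℝ) ν) :
    wassersteinDist (p : ℝ) μ ν ≤
      (∫ u in Set.Ioo (0:ℝ) 1, (qtl μ u - qtl ν u) ^ p) ^ (1 / (p : ℝ)) := by
  unfold wassersteinDist
  refine Real.rpow_le_rpow ENNReal.toReal_nonneg ?_ (by positivity)
  exact ENNReal.toReal_le_of_le_ofReal (integral_nonneg fun u => hpeven.pow_nonneg _)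
    (wass_inf_le p hp hpeven h h')

lemma mink (r : ℝ) (hr : 1 ≤ r) (π : Measure (ℝ × ℝ)) (f g : ℝ × ℝ → ℝ) (hf : Measurable f)
    (hg : Measurable g) (x : Fin 2 → ℝ) :
    (∫⁻ q, ⨅ i, (‖f q - x i‖₊ : ℝ≥0∞) ^ r ∂π) ^ (1 / r) ≤
      (∫⁻ q, (‖f q - g q‖₊ : ℝ≥0∞) ^ r ∂π) ^ (1 / r) +
      (∫⁻ q, ⨅ i, (‖g q - x i‖₊ : ℝ≥0∞) ^ r ∂π) ^ (1 / r) := by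
  have hr0 : 0 < r := by linarith
  have hpow : ∀ a : Fin 2 → ℝ≥0∞, ⨅ i, a i ^ r = (⨅ i, a i) ^ r := fun a =>
    ((ENNReal.orderIsoRpow r hr0).map_iInf a).symm
  simp_rw [hpow]
  refine le_trans ?_ (ENNReal.lintegral_Lp_add_le (by fun_prop) (Measurable.iInf fun i => by fun_prop).aemeasurable hr)
  refine ENNReal.rpow_le_rpow (lintegral_mono fun q => ?_) (by positivity)
  refine ENNReal.rpow_le_rpow ?_ hr0.le
  simp only [Pi.add_apply]
  rw [ENNReal.add_iInf]
  refine iInf_mono fun i => ?_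
  simp only [← enorm_eq_nnnorm]
  calc ‖f q - x i‖ₑ = ‖(f q - g q) + (g q - x i)‖ₑ := by congr 1; ring
    _ ≤ _ := enorm_add_le _ _

lemma quantErr_dist (p : ℕ) (hp : 2 ≤ p) (hpeven : Even p) {μ ν : Measure ℝ} [IsProbabilityMeasure μ]
    [IsProbabilityMeasure ν] (h : HasFiniteMoment (p : ℝ) μ) (h' : HasFiniteMoment (p : ℝ) ν)
    (x : Fin 2 → ℝ) :
    |quantErr (p : ℝ) 2 μ x - quantErr (p : ℝ) 2 ν x| ≤ wassersteinDist (p : ℝ) μ ν := by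
  have hp1 : (1 : ℝ) ≤ p := by exact_mod_cast (by omega : 1 ≤ p)
  have hp0 : (0 : ℝ) < p := by linarith
  set W := (⨅ π ∈ {π : Measure (ℝ × ℝ) | π.map Prod.fst = μ ∧ π.map Prod.snd = ν},
      ∫⁻ q, (‖q.1 - q.2‖₊ : ℝ≥0∞) ^ (p : ℝ) ∂π) with hW
  have hWt : W ≠ ∞ := ((wass_inf_le p hp hpeven h h').trans_lt ENNReal.ofReal_lt_top).ne
  have hfin : ∀ {ρ : Measure ℝ} [IsProbabilityMeasure ρ], HasFiniteMoment (p : ℝ) ρ →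
      (∫⁻ ξ, ⨅ i, (‖ξ - x i‖₊ : ℝ≥0∞) ^ (p : ℝ) ∂ρ) ^ (1 / (p : ℝ)) ≠ ∞ := by
    intro ρ _ hρ
    rw [lint_eq p hp hpeven hρ]
    exact ENNReal.rpow_ne_top_of_nonneg (by positivity) ENNReal.ofReal_ne_top
  have hmeas : Measurable (fun ξ : ℝ => ⨅ i, (‖ξ - x i‖₊ : ℝ≥0∞) ^ (p : ℝ)) :=
    Measurable.iInf fun i => by fun_prop
  have hle : ∀ A B : ℝ≥0∞, (∀ π ∈ {π : Measure (ℝ × ℝ) | π.map Prod.fst = μ ∧ π.map Prod.snd = ν},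
      A ≤ (∫⁻ q, (‖q.1 - q.2‖₊ : ℝ≥0∞) ^ (p : ℝ) ∂π) ^ (1 / (p : ℝ)) + B) →
      A ≤ W ^ (1 / (p : ℝ)) + B := by
    intro A B hAB
    have : (A - B) ^ (p : ℝ) ≤ W := by
      refine le_iInf₂ fun π hπ => ?_
      have := tsub_le_iff_right.2 (hAB π hπ)
      rw [one_div] at this
      exact (ENNReal.le_rpow_inv_iff hp0).1 this
    rw [one_div]
    exact tsub_le_iff_right.1 ((ENNReal.le_rpow_inv_iff hp0).2 this)
  have h1 := hle _ _ (fun π hπ => by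
    have := mink p hp1 π Prod.fst Prod.snd measurable_fst measurable_snd x
    rwa [← lintegral_map hmeas measurable_fst, ← lintegral_map hmeas measurable_snd,
      hπ.1, hπ.2] at this)
  have h2 := hle _ _ (fun π hπ => by
    have := mink p hp1 π Prod.snd Prod.fst measurable_snd measurable_fst x
    have hrev : ∀ q : ℝ × ℝ, ‖q.2 - q.1‖₊ = ‖q.1 - q.2‖₊ := fun q =>
      NNReal.eq (norm_sub_rev q.2 q.1)
    simp_rw [hrev] at this
    rwa [← lintegral_map hmeas measurable_fst, ← lintegral_map hmeas measurable_snd,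
      hπ.1, hπ.2] at this)
  have hWt' : W ^ (1 / (p : ℝ)) ≠ ∞ := ENNReal.rpow_ne_top_of_nonneg (by positivity) hWt
  have h1' := ENNReal.toReal_mono (ENNReal.add_ne_top.2 ⟨hWt', hfin h'⟩) h1
  have h2' := ENNReal.toReal_mono (ENNReal.add_ne_top.2 ⟨hWt', hfin h⟩) h2
  rw [ENNReal.toReal_add hWt' (hfin h')] at h1'
  rw [ENNReal.toReal_add hWt' (hfin h)] at h2'
  simp only [← ENNReal.toReal_rpow] at h1' h2'
  unfold quantErr wassersteinDist
  rw [abs_le]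
  constructor <;> linarith

lemma pt_upper (p : ℕ) (hp : 2 ≤ p) (hpeven : Even p) (a x : ℝ) (ha : 1 ≤ a) :
    (x - a) ^ p + (x - (-a)) ^ p ≤ 2 * a ^ p + 2 ^ (p + 1) * (1 + x ^ p) * a ^ (p - 2) := by
  have hb : ∀ k ≤ p, |x| ^ k ≤ 1 + x ^ p := by
    intro k hk
    have h0 := hpeven.pow_nonneg x
    rcases le_total |x| 1 with h | h
    · have := pow_le_one₀ (n := k) (abs_nonneg x) h
      linarith
    · have := pow_le_pow_right₀ h hk
      rw [hpeven.pow_abs] at this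
      linarith
  have h1 : (x - a) ^ p + (x - (-a)) ^ p =
      ∑ k ∈ Finset.range (p + 1), (x ^ k + (-x) ^ k) * a ^ (p - k) * (p.choose k) := by
    rw [← hpeven.neg_pow, show -(x - a) = -x + a by ring, show x - -a = x + a by ring, add_pow,
      add_pow, ← Finset.sum_add_distrib]
    exact Finset.sum_congr rfl fun k _ => by ring
  obtain ⟨m, rfl⟩ : ∃ m, p = m + 2 := ⟨p - 2, by omega⟩
  have hs : ∑ k ∈ Finset.range (m + 1), ((m + 2).choose (k + 1 + 1) : ℝ) ≤ 2 ^ (m + 2) := by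
    have := Nat.sum_range_choose (m + 2)
    rw [Finset.sum_range_succ', Finset.sum_range_succ'] at this
    have h2 : (∑ k ∈ Finset.range (m + 1), (m + 2).choose (k + 1 + 1)) ≤ 2 ^ (m + 2) := by omega
    exact_mod_cast h2
  rw [h1, Finset.sum_range_succ', Finset.sum_range_succ']
  have h3 : ∑ k ∈ Finset.range (m + 1), (x ^ (k + 1 + 1) + (-x) ^ (k + 1 + 1)) *
      a ^ (m + 2 - (k + 1 + 1)) * ((m + 2).choose (k + 1 + 1)) ≤
      ∑ k ∈ Finset.range (m + 1), (2 * (1 + x ^ (m + 2)) * a ^ m) * ((m + 2).choose (k + 1 + 1) : ℝ) := by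
    refine Finset.sum_le_sum fun k hk => ?_
    have hk : k < m + 1 := Finset.mem_range.1 hk
    have e1 := (le_abs_self _).trans ((abs_pow x (k + 1 + 1)).le.trans (hb (k + 1 + 1) (by omega)))
    have e2 : (-x) ^ (k + 1 + 1) ≤ 1 + x ^ (m + 2) := by
      refine (le_abs_self _).trans ((abs_pow (-x) (k + 1 + 1)).le.trans ?_)
      rw [abs_neg]
      exact hb (k + 1 + 1) (by omega)
    have e3 : a ^ (m + 2 - (k + 1 + 1)) ≤ a ^ m := pow_le_pow_right₀ ha (by omega)
    have e4 := hpeven.pow_nonneg x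
    have e5 : 0 ≤ a ^ (m + 2 - (k + 1 + 1)) := by positivity
    gcongr
    linarith
  rw [← Finset.mul_sum] at h3
  have h4 : 0 ≤ 2 * (1 + x ^ (m + 2)) * a ^ m := by
    have := hpeven.pow_nonneg x
    positivity
  have h5 := mul_le_mul_of_nonneg_left hs h4
  simp only [zero_add, pow_one, add_neg_cancel, zero_mul, pow_zero, Nat.choose_zero_right, Nat.cast_one,
    mul_one, Nat.sub_zero, add_zero, Nat.add_sub_cancel]
  have h6 : (2:ℝ) ^ (m + 2 + 1) = 2 * 2 ^ (m + 2) := by ring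
  rw [h6]
  nlinarith [h3.trans h5]

lemma C_le (p : ℕ) (hp : 2 ≤ p) (hpeven : Even p) {μ ν : Measure ℝ} [IsProbabilityMeasure μ]
    [IsProbabilityMeasure ν] (h : HasFiniteMoment (p : ℝ) μ) (h' : HasFiniteMoment (p : ℝ) ν) (C : ℝ)
    (H : ∀ a b : ℝ, quantErr (p : ℝ) 2 μ ![a, b] = quantErr (p : ℝ) 2 ν ![a, b] + C) : C ≤ 0 := by
  by_contra! hC
  have hpow : ∀ {ρ : Measure ℝ} [IsProbabilityMeasure ρ] (_ : HasFiniteMoment (p : ℝ) ρ) (a : ℝ),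
      quantErr (p : ℝ) 2 ρ ![a, a] ^ p = ∫ ξ, (ξ - a) ^ p ∂ρ := by
    intro ρ _ hρ a
    rw [quantErr_pow p hp hpeven hρ]
    simp [mm]
  have hnn : ∀ (ρ : Measure ℝ) (a : ℝ), 0 ≤ quantErr (p : ℝ) 2 ρ ![a, a] := fun ρ a => by
    unfold quantErr; positivity
  set K : ℝ := ∫ x, 2 ^ (p + 1) * (1 + x ^ p) ∂μ with hK
  have hx : Integrable (fun x : ℝ => x ^ p) μ := by simpa using integrable_pow p hp hpeven h 0
  have hKi : Integrable (fun x : ℝ => 2 ^ (p + 1) * (1 + x ^ p)) μ :=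
    ((integrable_const 1).add hx).const_mul _
  have main : ∀ a : ℝ, 1 ≤ a → C * a ≤ K := by
    intro a ha
    have ha0 : 0 < a := by linarith
    have up : (∫ ξ, (ξ - a) ^ p ∂μ) + (∫ ξ, (ξ - (-a)) ^ p ∂μ) ≤ 2 * a ^ p + K * a ^ (p - 2) := by
      rw [← integral_add (integrable_pow p hp hpeven h a) (integrable_pow p hp hpeven h (-a))]
      calc _ ≤ ∫ x, (2 * a ^ p + 2 ^ (p + 1) * (1 + x ^ p) * a ^ (p - 2)) ∂μ :=
            integral_mono ((integrable_pow p hp hpeven h a).add (integrable_pow p hp hpeven h (-a)))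
              ((integrable_const _).add (hKi.mul_const _)) fun x => pt_upper p hp hpeven a x ha
        _ = _ := by
            rw [integral_add (integrable_const _) (hKi.mul_const _), integral_mul_const (a ^ (p - 2)), ← hK]
            simp
    have lo : 2 * a ^ p ≤ (∫ ξ, (ξ - a) ^ p ∂ν) + (∫ ξ, (ξ - (-a)) ^ p ∂ν) := by
      rw [← integral_add (integrable_pow p hp hpeven h' a) (integrable_pow p hp hpeven h' (-a))]
      calc 2 * a ^ p = ∫ x, 2 * a ^ p ∂ν := by simp
        _ ≤ _ := integral_mono (integrable_const _)
            ((integrable_pow p hp hpeven h' a).add (integrable_pow p hp hpeven h' (-a))) fun x => by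
              have := hpeven.add_pow_le (a := -(x - a)) (b := x - -a)
              rw [hpeven.neg_pow, show -(x - a) + (x - -a) = 2 * a by ring, mul_pow] at this
              obtain ⟨k, rfl⟩ : ∃ k, p = k + 1 := ⟨p - 1, by omega⟩
              rw [pow_succ 2 k, mul_assoc] at this
              exact le_of_mul_le_mul_left this (by positivity)
    rw [← hpow h, ← hpow h, H, H] at up
    rw [← hpow h', ← hpow h'] at lo
    have n1 := hnn ν a
    have n2 := hnn ν (-a)
    set y := quantErr (p : ℝ) 2 ν ![a, a]
    set z := quantErr (p : ℝ) 2 ν ![-a, -a]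
    obtain ⟨k, rfl⟩ : ∃ k, p = k + 2 := ⟨p - 2, by omega⟩
    have hb : ∀ t : ℝ, 0 ≤ t → t ^ (k + 2) + C * t ^ (k + 1) ≤ (t + C) ^ (k + 2) := by
      intro t ht
      calc _ = t ^ (k + 1) * (t + C) := by ring
        _ ≤ (t + C) ^ (k + 1) * (t + C) := by gcongr; linarith
        _ = _ := by ring
    have b1 := hb y n1
    have b2 := hb z n2
    have hor : a ≤ y ∨ a ≤ z := by
      by_contra! hc
      have := pow_lt_pow_left₀ hc.1 n1 (show k + 2 ≠ 0 by omega)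
      have := pow_lt_pow_left₀ hc.2 n2 (show k + 2 ≠ 0 by omega)
      linarith
    have hyz : a ^ (k + 1) ≤ y ^ (k + 1) + z ^ (k + 1) := by
      have q1 : 0 ≤ y ^ (k + 1) := by positivity
      have q2 : 0 ≤ z ^ (k + 1) := by positivity
      rcases hor with hh | hh
      · have := pow_le_pow_left₀ ha0.le hh (k + 1); linarith
      · have := pow_le_pow_left₀ ha0.le hh (k + 1); linarith
    have hfin : C * a ^ (k + 1) ≤ K * a ^ k := by
      have := mul_le_mul_of_nonneg_left hyz hC.le
      simp only [Nat.add_sub_cancel] at up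
      linarith
    rw [pow_succ' a k, ← mul_assoc] at hfin
    exact le_of_mul_le_mul_right hfin (by positivity)
  have m1 := main (max 1 ((K + 1) / C)) (le_max_left _ _)
  have m2 : (K + 1) ≤ C * max 1 ((K + 1) / C) := by
    have := mul_le_mul_of_nonneg_left (le_max_right 1 ((K + 1) / C)) hC.le
    rwa [mul_div_cancel₀ _ hC.ne'] at this
  linarith

lemma qtl_tendsto' (p : ℕ) (hp : 2 ≤ p) (hpeven : Even p) {μ : ℕ → Measure ℝ} {μ' : Measure ℝ}
    [∀ n, IsProbabilityMeasure (μ n)] [IsProbabilityMeasure μ']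
    (hm : ∀ n, HasFiniteMoment (p : ℝ) (μ n)) (hm' : HasFiniteMoment (p : ℝ) μ')
    (H : ∀ a b, Tendsto (fun n => ∫ ξ, mm p a b ξ ∂(μ n)) atTop (𝓝 (∫ ξ, mm p a b ξ ∂μ'))) :
    ∀ᵐ u ∂(volume.restrict (Set.Ioo (0:ℝ) 1)),
      Tendsto (fun n => qtl (μ n) u) atTop (𝓝 (qtl μ' u)) := by
  have hp1 : (1 : ℝ≥0∞) ≤ p := by exact_mod_cast (by omega : 1 ≤ p)
  exact qtl_tendsto (fun n => (memLp_of_moment p hp (hm n)).integrable hp1)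
    ((memLp_of_moment p hp hm').integrable hp1) (tendsto_pos p hp hpeven hm hm' H)

/-- dimension one, even integer order `p`, `N = 2`: (a) if
`e_{2,p}(μ, ·) = e_{2,p}(ν, ·) + C` on `ℝ²`, then `μ = ν`; (b) `W_p(μ_n, μ_∞) → 0` iff
`e_{2,p}(μ_n, ·) → e_{2,p}(μ_∞, ·)` uniformly on `ℝ²` iff pointwise on `ℝ²`. -/
theorem stmt17 (p : ℕ) (hp : 2 ≤ p) (hpeven : Even p) :
    (∀ (μ ν : Measure ℝ) (_ : IsProbabilityMeasure μ) (_ : IsProbabilityMeasure ν)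
      (_ : HasFiniteMoment (p : ℝ) μ) (_ : HasFiniteMoment (p : ℝ) ν) (C : ℝ),
      (∀ a b : ℝ, quantErr (p : ℝ) 2 μ ![a, b] = quantErr (p : ℝ) 2 ν ![a, b] + C) →
      μ = ν) ∧
    (∀ (μ : ℕ → Measure ℝ) (μ' : Measure ℝ)
      (_ : ∀ n, IsProbabilityMeasure (μ n)) (_ : IsProbabilityMeasure μ')
      (_ : ∀ n, HasFiniteMoment (p : ℝ) (μ n)) (_ : HasFiniteMoment (p : ℝ) μ'),
      (Tendsto (fun n => wassersteinDist (p : ℝ) (μ n) μ') atTop (𝓝 0) ↔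
        TendstoUniformly (fun n (x : Fin 2 → ℝ) => quantErr (p : ℝ) 2 (μ n) x)
          (quantErr (p : ℝ) 2 μ') atTop) ∧
      (Tendsto (fun n => wassersteinDist (p : ℝ) (μ n) μ') atTop (𝓝 0) ↔
        ∀ x : Fin 2 → ℝ,
          Tendsto (fun n => quantErr (p : ℝ) 2 (μ n) x) atTop
            (𝓝 (quantErr (p : ℝ) 2 μ' x)))) := by
  constructor
  · intro μ ν _ _ h h' C H
    have c1 := C_le p hp hpeven h h' C H
    have c2 := C_le p hp hpeven h' h (-C) (fun a b => by rw [H]; ring)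
    have hC : C = 0 := by linarith
    have hm : ∀ a b, ∫ ξ, mm p a b ξ ∂μ = ∫ ξ, mm p a b ξ ∂ν := by
      intro a b
      have e1 := quantErr_pow p hp hpeven h ![a, b]
      have e2 := quantErr_pow p hp hpeven h' ![a, b]
      rw [H, hC, add_zero, e2] at e1
      simpa using e1.symm
    have hae := qtl_tendsto' p hp hpeven (μ := fun _ => μ) (fun _ => h) h'
      (fun a b => by rw [hm]; exact tendsto_const_nhds)
    rw [← qtl_map μ, ← qtl_map ν]
    refine Measure.map_congr ?_
    filter_upwards [hae] with u hu
    exact tendsto_nhds_unique tendsto_const_nhds hu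
  · intro μ μ' _ _ h h'
    have h12 : Tendsto (fun n => wassersteinDist (p : ℝ) (μ n) μ') atTop (𝓝 0) →
        TendstoUniformly (fun n (x : Fin 2 → ℝ) => quantErr (p : ℝ) 2 (μ n) x)
          (quantErr (p : ℝ) 2 μ') atTop := by
      intro hW
      rw [Metric.tendstoUniformly_iff]
      intro e he
      filter_upwards [hW.eventually (gt_mem_nhds he)] with n hn x
      rw [dist_comm, Real.dist_eq]
      exact (quantErr_dist p hp hpeven (h n) h' x).trans_lt hn
    have h31 : (∀ x : Fin 2 → ℝ, Tendsto (fun n => quantErr (p : ℝ) 2 (μ n) x) atTop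
            (𝓝 (quantErr (p : ℝ) 2 μ' x))) →
        Tendsto (fun n => wassersteinDist (p : ℝ) (μ n) μ') atTop (𝓝 0) := by
      intro H
      have Hm : ∀ a b, Tendsto (fun n => ∫ ξ, mm p a b ξ ∂(μ n)) atTop
          (𝓝 (∫ ξ, mm p a b ξ ∂μ')) := by
        intro a b
        have := (H ![a, b]).pow p
        simp_rw [fun n => quantErr_pow p hp hpeven (h n) ![a, b],
          quantErr_pow p hp hpeven h' ![a, b]] at this
        simpa using this
      have hae := qtl_tendsto' p hp hpeven h h' Hm
      have hint : Tendsto (fun n => ∫ u in Set.Ioo (0:ℝ) 1, qtl (μ n) u ^ p) atTop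
          (𝓝 (∫ u in Set.Ioo (0:ℝ) 1, qtl μ' u ^ p)) := by
        simp_rw [qtl_int]
        simpa [mm] using Hm 0 0
      have hL := fatou_Lp p hp hpeven (fun n => qtl_memLp p hp (h n)) (qtl_memLp p hp h') hae hint
      have hp0 : (0 : ℝ) < 1 / (p : ℝ) := by
        have : (0:ℝ) < p := by exact_mod_cast (by omega : 0 < p)
        positivity
      have hL' := hL.rpow_const (p := 1 / (p : ℝ)) (Or.inr hp0.le)
      rw [Real.zero_rpow hp0.ne'] at hL'
      refine squeeze_zero (fun n => ?_) (fun n => wass_le p hp hpeven (h n) h') hL'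
      unfold wassersteinDist
      positivity
    exact ⟨⟨h12, fun hU => h31 fun x => hU.tendsto_at x⟩,
      ⟨fun hW x => (h12 hW).tendsto_at x, h31⟩⟩
end
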